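/- Let A be a ℂ-vector space, let K_p : A^p → ℂ (p ≥ 1) be multilinear functionals, and let φ_t be defined from them by the monotone partition formula. Then for every n ≥ 1 and all X₁, ..., Xₙ ∈ A, (d/dt) φ_t(X₁, ..., Xₙ) = Σ_{∅ ≠ V ⊆ {1,...,n}} K_{|V|}(X_V) · ∏_{j=1}^{p} φ_t(X_{V_j}) as an identity of polynomials in t, where V₁, ..., V_p are the gap blocks of V and the empty product is 1. -/

import Mathlib

/-!
The derivative of `t ^ k / k!` is `t ^ (k - 1) / (k - 1)!`, so differentiating `φ_t` amounts to
deleting the block `V` with the smallest label of every monotone partition; what remains is a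
monotone partition of the complement of `V` each of whose blocks lies in one gap of `V`, and it
has to be shown that summing over these gives the product over the gaps.

To have an induction, the partitions of `{1, …, n}` are embedded in a family indexed by all
subsets `S`: `removalPoly w S` is the exponential generating polynomial of the sequences of
nonempty blocks that exhaust `S`, each block lying in one interval component of what its
predecessors leave. A labeling is monotone exactly when no label smaller than that of a block
occurs between two elements of the block (`isMonotoneLabel_iff`), so monotone partitions are the
removal sequences of the full set and `φ_t` is its polynomial (`phiPoly_eq_removalPoly`).
Deleting the first block is built into the recursion (`derivative_removalPoly`).

Multiplicativity over separated sets (`removalPoly_union`) needs no count of shuffles: by the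
Leibniz rule and induction on the size, both sides have the same derivative, and their constant
terms agree. Since the gap blocks of `V` are the interval components of its complement, this gives
the product formula (`removalPoly_compl`), and order-preserving reindexing of an interval
(`removalPoly_restrictFam`) identifies each factor with a `φ_t` of a subfamily.
-/

open scoped Classical

/-- Encoding of a monotone partition `(π, λ)` of `{1, …, n}` by its labeling function
`ℓ : Fin n → Fin n`, where `ℓ i` is the (`λ`-increasing) position of the block of `π`
containing `i`. The conditions say: the set of labels used is an initial segment
(so blocks are numbered `0, 1, …, |π| - 1` in `λ`-increasing order), the underlying
partition into fibers is non-crossing, and whenever the block labeled `u` nests inside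
the block labeled `v` (i.e. `V_u ≻ V_v`), one has `v < u` (i.e. `V_u >_λ V_v`). -/
def IsMonotoneLabel {n : ℕ} (ℓ : Fin n → Fin n) : Prop :=
  (∀ j k : Fin n, k ≤ j → (∃ i, ℓ i = j) → ∃ i, ℓ i = k) ∧
  (∀ a b c d : Fin n, a < b → b < c → c < d → ℓ a = ℓ c → ℓ b = ℓ d → ℓ a = ℓ b) ∧
  (∀ u v : Fin n, (∃ i, ℓ i = u) →
    (∃ i j : Fin n, ℓ i = v ∧ ℓ j = v ∧ ∀ k, ℓ k = u → i < k ∧ k < j) → v < u)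

/-- The finite set `M(n)` of monotone partitions of `{1, …, n}`, encoded by labeling
functions. -/
noncomputable def monotoneLabels (n : ℕ) : Finset (Fin n → Fin n) :=
  Finset.univ.filter IsMonotoneLabel

/-- The number `|π|` of blocks of the partition encoded by `ℓ`. -/
def numBlocks {n : ℕ} (ℓ : Fin n → Fin n) : ℕ := (Finset.image ℓ Finset.univ).card

/-- The block of the partition encoded by `ℓ` carrying the label `j`. -/
noncomputable def labelBlock {n : ℕ} (ℓ : Fin n → Fin n) (j : Fin n) : Finset (Fin n) :=
  Finset.univ.filter (fun i => ℓ i = j)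

/-- Given a family `K` of multilinear functionals (`K m` being `(m+1)`-linear, so that
`K_p` for `p ≥ 1` corresponds to `K (p-1)`), the quantity `K_{|W|}(X_W)`, i.e. `K_{|W|}`
applied to `(X_j)_{j ∈ W}` in increasing order of `j` (junk value `1` if `W = ∅`). -/
noncomputable def blockApply {A : Type*} [AddCommMonoid A] [Module ℂ A]
    (K : ∀ m : ℕ, MultilinearMap ℂ (fun _ : Fin (m + 1) => A) ℂ)
    {n : ℕ} (X : Fin n → A) (W : Finset (Fin n)) : ℂ :=
  if h : W.Nonempty then
    K (W.card - 1) (fun j => X (W.orderIsoOfFin rfl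
      ⟨(j : ℕ), by have hj := j.isLt; have hc := Finset.card_pos.mpr h; omega⟩))
  else 1

/-- `K_π(X₁, …, Xₙ) = ∏_{V ∈ π} K_{|V|}(X_V)` for the partition `π` encoded by `ℓ`. -/
noncomputable def cumProd {A : Type*} [AddCommMonoid A] [Module ℂ A]
    (K : ∀ m : ℕ, MultilinearMap ℂ (fun _ : Fin (m + 1) => A) ℂ)
    {n : ℕ} (X : Fin n → A) (ℓ : Fin n → Fin n) : ℂ :=
  ∏ j ∈ Finset.image ℓ Finset.univ, blockApply K X (labelBlock ℓ j)

/-- `φ_t(X₁, …, Xₙ) = Σ_{(π,λ) ∈ M(n)} (t^{|π|}/|π|!) K_π(X₁, …, Xₙ)`, as a polynomial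
in the variable `t`. -/
noncomputable def phiPoly {A : Type*} [AddCommMonoid A] [Module ℂ A]
    (K : ∀ m : ℕ, MultilinearMap ℂ (fun _ : Fin (m + 1) => A) ℂ)
    {n : ℕ} (X : Fin n → A) : Polynomial ℂ :=
  ∑ ℓ ∈ monotoneLabels n, Polynomial.C ((Nat.factorial (numBlocks ℓ) : ℂ))⁻¹ *
    Polynomial.X ^ numBlocks ℓ * Polynomial.C (cumProd K X ℓ)

/-- The subfamily `(X_j)_{j ∈ W}`, reindexed in increasing order by `Fin |W|`. -/
noncomputable def restrictFam {A : Type*} {n : ℕ} (X : Fin n → A) (W : Finset (Fin n)) :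
    Fin W.card → A :=
  fun j => X (W.orderIsoOfFin rfl j)

/-- `W` is a (nonempty) block of interval type in `{1, …, n}`. -/
def IsIntervalBlock {n : ℕ} (W : Finset (Fin n)) : Prop :=
  W.Nonempty ∧ ∃ a b : Fin n, W = Finset.Icc a b

/-- `W` is a gap block of `V`, i.e. a maximal interval contained in the complement of `V`. -/
def IsGapBlock {n : ℕ} (V W : Finset (Fin n)) : Prop :=
  IsIntervalBlock W ∧ W ⊆ Vᶜ ∧
    ∀ W' : Finset (Fin n), IsIntervalBlock W' → W ⊆ W' → W' ⊆ Vᶜ → W' = W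

/-- The finite set of gap blocks of `V ⊆ {1, …, n}`. -/
noncomputable def gapBlocks {n : ℕ} (V : Finset (Fin n)) : Finset (Finset (Fin n)) :=
  Finset.univ.filter (fun W => IsGapBlock V W)

/-! ### The recursive model -/

/-- Every element of the convex hull of `V` lies in `S`; for nonempty `V` this says that `V` is
contained in a single interval component of `S` (in particular `V ⊆ S`). -/
def InComponent {n : ℕ} (S V : Finset (Fin n)) : Prop :=
  ∀ a ∈ V, ∀ b ∈ V, Finset.Icc a b ⊆ S

lemma InComponent.subset {n : ℕ} {S V : Finset (Fin n)} (h : InComponent S V) : V ⊆ S :=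
  fun a ha => h a ha a ha (by simp)

/-- The weighted count of the ways to exhaust `S` by removing `k` nonempty blocks one after
the other, each contained in a single interval component of what is left; a removal sequence
has as weight the product of the weights `w` of its blocks. -/
noncomputable def removalSum {n : ℕ} (w : Finset (Fin n) → ℂ) : ℕ → Finset (Fin n) → ℂ
  | 0, S => if S = ∅ then 1 else 0
  | k + 1, S => ∑ V ∈ Finset.univ.filter (fun V : Finset (Fin n) => V.Nonempty ∧ InComponent S V),
      w V * removalSum w k (S \ V)

/-- The exponential generating polynomial of `removalSum w · S`. -/
noncomputable def removalPoly {n : ℕ} (w : Finset (Fin n) → ℂ) (S : Finset (Fin n)) :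
    Polynomial ℂ :=
  ∑ k ∈ Finset.range (n + 1), Polynomial.C (removalSum w k S / (k.factorial : ℂ)) * Polynomial.X ^ k

lemma removalSum_eq_zero {n : ℕ} (w : Finset (Fin n) → ℂ) (k : ℕ) (S : Finset (Fin n))
    (h : S.card < k) : removalSum w k S = 0 := by
  induction k generalizing S with
  | zero => omega
  | succ k ih =>
    rw [removalSum]
    refine Finset.sum_eq_zero fun V hV => ?_
    obtain ⟨hne, hV⟩ := (Finset.mem_filter.1 hV).2
    rw [ih, mul_zero]
    have h1 := Finset.card_sdiff_add_card_eq_card hV.subset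
    have h2 := hne.card_pos
    omega

lemma coeff_removalPoly {n : ℕ} (w : Finset (Fin n) → ℂ) (S : Finset (Fin n)) (k : ℕ) :
    (removalPoly w S).coeff k = removalSum w k S / (k.factorial : ℂ) := by
  rw [removalPoly, Polynomial.finsetSum_coeff]
  simp only [Polynomial.coeff_C_mul_X_pow]
  rw [Finset.sum_ite_eq]
  split_ifs with h
  · rfl
  · rw [removalSum_eq_zero, zero_div]
    have := Finset.card_le_univ S
    simp only [Fintype.card_fin, Finset.mem_range] at *
    omega

/-- Differentiation removes the first block. -/
lemma derivative_removalPoly {n : ℕ} (w : Finset (Fin n) → ℂ) (S : Finset (Fin n)) :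
    Polynomial.derivative (removalPoly w S) =
      ∑ V ∈ Finset.univ.filter (fun V : Finset (Fin n) => V.Nonempty ∧ InComponent S V),
        Polynomial.C (w V) * removalPoly w (S \ V) := by
  ext k
  rw [Polynomial.coeff_derivative, Polynomial.finsetSum_coeff, coeff_removalPoly, removalSum,
    Finset.sum_div, Finset.sum_mul]
  refine Finset.sum_congr rfl fun V _ => ?_
  rw [Polynomial.coeff_C_mul, coeff_removalPoly, Nat.factorial_succ]
  have h1 : ((k : ℂ) + 1) ≠ 0 := by exact_mod_cast Nat.succ_ne_zero k
  have h2 : ((k.factorial : ℕ) : ℂ) ≠ 0 := by exact_mod_cast Nat.factorial_ne_zero k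
  push_cast
  field_simp

lemma removalPoly_empty {n : ℕ} (w : Finset (Fin n) → ℂ) : removalPoly w ∅ = 1 := by
  ext k
  rw [coeff_removalPoly]
  cases k with
  | zero => simp [removalSum]
  | succ k => rw [removalSum_eq_zero _ _ _ (by simp)]; simp [Polynomial.coeff_one]

lemma coeff_zero_removalPoly {n : ℕ} (w : Finset (Fin n) → ℂ) {S : Finset (Fin n)}
    (h : S.Nonempty) : (removalPoly w S).coeff 0 = 0 := by
  simp [coeff_removalPoly, removalSum, h.ne_empty]

lemma polynomial_eq_of_derivative_eq {p q : Polynomial ℂ}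
    (h : Polynomial.derivative p = Polynomial.derivative q) (h0 : p.coeff 0 = q.coeff 0) :
    p = q := by
  ext k
  cases k with
  | zero => exact h0
  | succ k =>
    have h2 := congrArg (fun r => Polynomial.coeff r k) h
    simp only [Polynomial.coeff_derivative] at h2
    exact mul_right_cancel₀ (by exact_mod_cast Nat.succ_ne_zero k) h2

/-! ### Multiplicativity over separated sets -/

/-- No interval component of `S ∪ T` meets both `S` and `T`. -/
def Separated {n : ℕ} (S T : Finset (Fin n)) : Prop :=
  ∀ a ∈ S, ∀ b ∈ T, ¬ Finset.uIcc a b ⊆ S ∪ T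

lemma Separated.symm {n : ℕ} {S T : Finset (Fin n)} (h : Separated S T) : Separated T S :=
  fun a ha b hb hab => h b hb a ha (by rwa [Finset.uIcc_comm, Finset.union_comm])

lemma Separated.mono_left {n : ℕ} {S S' T : Finset (Fin n)} (h : Separated S T) (hS : S' ⊆ S) :
    Separated S' T :=
  fun a ha b hb hab => h a (hS ha) b hb (hab.trans (Finset.union_subset_union_left hS))

lemma Separated.disjoint {n : ℕ} {S T : Finset (Fin n)} (h : Separated S T) : Disjoint S T :=
  Finset.disjoint_left.2 fun a ha hb => h a ha a hb (by simp [ha])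

lemma Separated.inComponent_of_mem {n : ℕ} {S T V : Finset (Fin n)} (h : Separated S T)
    (hV : InComponent (S ∪ T) V) {x : Fin n} (hx : x ∈ V) (hxS : x ∈ S) : InComponent S V := by
  have key : ∀ c ∈ S ∪ T, Finset.uIcc x c ⊆ S ∪ T → c ∈ S := by
    intro c hc hsub
    rcases Finset.mem_union.1 hc with hc | hc
    · exact hc
    · exact absurd hsub (h x hxS c hc)
  have huIcc : ∀ a ∈ V, Finset.uIcc x a ⊆ S ∪ T := by
    intro a ha
    rcases le_total x a with hxa | hxa
    · rw [Finset.uIcc_of_le hxa]; exact hV x hx a ha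
    · rw [Finset.uIcc_of_ge hxa]; exact hV a ha x hx
  intro a ha b hb c hc
  refine key c (hV a ha b hb hc) fun y hy => ?_
  rw [Finset.mem_Icc] at hc
  rcases le_total x c with hxc | hxc
  · refine huIcc b hb ?_
    rw [Finset.uIcc_of_le hxc, Finset.mem_Icc] at hy
    rw [Finset.uIcc_of_le (hxc.trans hc.2), Finset.mem_Icc]
    exact ⟨hy.1, hy.2.trans hc.2⟩
  · refine huIcc a ha ?_
    rw [Finset.uIcc_of_ge hxc, Finset.mem_Icc] at hy
    rw [Finset.uIcc_of_ge (hc.1.trans hxc), Finset.mem_Icc]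
    exact ⟨hc.1.trans hy.1, hy.2⟩

lemma InComponent.mono {n : ℕ} {S S' V : Finset (Fin n)} (h : InComponent S V) (hS : S ⊆ S') :
    InComponent S' V :=
  fun a ha b hb => (h a ha b hb).trans hS

lemma Separated.filter_eq {n : ℕ} {S T : Finset (Fin n)} (h : Separated S T) :
    Finset.univ.filter (fun V : Finset (Fin n) => V.Nonempty ∧ InComponent (S ∪ T) V) =
      Finset.univ.filter (fun V : Finset (Fin n) => V.Nonempty ∧ InComponent S V) ∪
        Finset.univ.filter (fun V : Finset (Fin n) => V.Nonempty ∧ InComponent T V) := by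
  ext V
  simp only [Finset.mem_union, Finset.mem_filter, Finset.mem_univ, true_and]
  constructor
  · rintro ⟨⟨x, hx⟩, hV⟩
    rcases Finset.mem_union.1 (hV.subset hx) with hxS | hxT
    · exact Or.inl ⟨⟨x, hx⟩, h.inComponent_of_mem hV hx hxS⟩
    · rw [Finset.union_comm] at hV
      exact Or.inr ⟨⟨x, hx⟩, h.symm.inComponent_of_mem hV hx hxT⟩
  · rintro (⟨hne, hV⟩ | ⟨hne, hV⟩)
    · exact ⟨hne, hV.mono Finset.subset_union_left⟩
    · exact ⟨hne, hV.mono Finset.subset_union_right⟩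

/-- By induction on the size, both sides have the same derivative (Leibniz rule) and the same
constant term; this replaces counting shuffles of two linear orders. -/
lemma removalPoly_union {n : ℕ} (w : Finset (Fin n) → ℂ) (S T : Finset (Fin n))
    (h : Separated S T) : removalPoly w (S ∪ T) = removalPoly w S * removalPoly w T := by
  induction hm : S.card + T.card using Nat.strong_induction_on generalizing S T with
  | _ m ih =>
    rcases S.eq_empty_or_nonempty with rfl | hS
    · simp [removalPoly_empty]
    rcases T.eq_empty_or_nonempty with rfl | hT
    · simp [removalPoly_empty]
    refine polynomial_eq_of_derivative_eq ?_ ?_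
    · rw [Polynomial.derivative_mul, derivative_removalPoly, derivative_removalPoly,
        derivative_removalPoly, h.filter_eq, Finset.sum_union, Finset.sum_mul, Finset.mul_sum]
      · refine congrArg₂ (· + ·) ?_ ?_
        · refine Finset.sum_congr rfl fun V hV => ?_
          obtain ⟨hne, hV⟩ := (Finset.mem_filter.1 hV).2
          have hVS := hV.subset
          have hT' : T \ V = T := Finset.sdiff_eq_self_of_disjoint
            (h.disjoint.symm.mono_right hVS)
          have hc := Finset.card_sdiff_add_card_eq_card hVS
          have hp := hne.card_pos
          rw [Finset.union_sdiff_distrib, hT', mul_assoc,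
            ih ((S \ V).card + T.card) (by omega) _ _ (h.mono_left Finset.sdiff_subset) rfl]
        · refine Finset.sum_congr rfl fun V hV => ?_
          obtain ⟨hne, hV⟩ := (Finset.mem_filter.1 hV).2
          have hVT := hV.subset
          have hS' : S \ V = S := Finset.sdiff_eq_self_of_disjoint
            (h.disjoint.mono_right hVT)
          have hc := Finset.card_sdiff_add_card_eq_card hVT
          have hp := hne.card_pos
          rw [Finset.union_sdiff_distrib, hS', mul_left_comm,
            ih (S.card + (T \ V).card) (by omega) _ _
              (h.symm.mono_left Finset.sdiff_subset).symm rfl]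
      · rw [Finset.disjoint_left]
        intro V hV hV'
        obtain ⟨⟨x, hx⟩, hV⟩ := (Finset.mem_filter.1 hV).2
        obtain ⟨-, hV'⟩ := (Finset.mem_filter.1 hV').2
        exact Finset.disjoint_left.1 h.disjoint (hV.subset hx) (hV'.subset hx)
    · rw [Polynomial.mul_coeff_zero, coeff_zero_removalPoly w hS, zero_mul,
        coeff_zero_removalPoly w (hS.mono Finset.subset_union_left)]

/-! ### Gap blocks as interval components of the complement -/

/-- The interval component of `i` in the complement of `V` (empty if `i ∈ V`). -/
noncomputable def gapOf {n : ℕ} (V : Finset (Fin n)) (i : Fin n) : Finset (Fin n) :=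
  Finset.univ.filter (fun j => Finset.uIcc i j ⊆ Vᶜ)

lemma IsIntervalBlock.uIcc_subset {n : ℕ} {W : Finset (Fin n)} (hW : IsIntervalBlock W)
    {i j : Fin n} (hi : i ∈ W) (hj : j ∈ W) : Finset.uIcc i j ⊆ W := by
  obtain ⟨-, a, b, rfl⟩ := hW
  exact Finset.uIcc_subset_Icc hi hj

lemma subset_gapOf {n : ℕ} {V W : Finset (Fin n)} (hW : IsIntervalBlock W) (hV : W ⊆ Vᶜ)
    {i : Fin n} (hi : i ∈ W) : W ⊆ gapOf V i := by
  intro j hj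
  simp only [gapOf, Finset.mem_filter, Finset.mem_univ, true_and]
  exact (hW.uIcc_subset hi hj).trans hV

lemma gapOf_subset {n : ℕ} (V : Finset (Fin n)) (i : Fin n) : gapOf V i ⊆ Vᶜ := by
  intro j hj
  simp only [gapOf, Finset.mem_filter, Finset.mem_univ, true_and] at hj
  exact hj Finset.right_mem_uIcc

lemma self_mem_gapOf {n : ℕ} {V : Finset (Fin n)} {i : Fin n} (hi : i ∉ V) : i ∈ gapOf V i := by
  simp [gapOf, hi]

lemma mem_gapOf {n : ℕ} {V : Finset (Fin n)} {i j : Fin n} :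
    j ∈ gapOf V i ↔ Finset.uIcc i j ⊆ Vᶜ := by
  simp [gapOf]

lemma isIntervalBlock_gapOf {n : ℕ} {V : Finset (Fin n)} {i : Fin n} (hi : i ∉ V) :
    IsIntervalBlock (gapOf V i) := by
  have hne : (gapOf V i).Nonempty := ⟨i, self_mem_gapOf hi⟩
  refine ⟨hne, (gapOf V i).min' hne, (gapOf V i).max' hne, ?_⟩
  ext j
  rw [Finset.mem_Icc]
  refine ⟨fun hj => ⟨Finset.min'_le _ _ hj, Finset.le_max' _ _ hj⟩, fun ⟨h1, h2⟩ => ?_⟩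
  have hmin := Finset.min'_mem _ hne
  have hmax := Finset.max'_mem _ hne
  rw [mem_gapOf] at hmin hmax ⊢
  rcases le_total i j with hij | hij
  · refine (Finset.uIcc_subset_uIcc Finset.left_mem_uIcc ?_).trans hmax
    rw [Finset.uIcc_of_le (hij.trans h2), Finset.mem_Icc]
    exact ⟨hij, h2⟩
  · refine (Finset.uIcc_subset_uIcc Finset.left_mem_uIcc ?_).trans hmin
    rw [Finset.uIcc_of_ge (h1.trans hij), Finset.mem_Icc]
    exact ⟨h1, hij⟩

lemma isGapBlock_gapOf {n : ℕ} {V : Finset (Fin n)} {i : Fin n} (hi : i ∉ V) :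
    IsGapBlock V (gapOf V i) :=
  ⟨isIntervalBlock_gapOf hi, gapOf_subset V i, fun _ hW' hsub hV =>
    (subset_gapOf hW' hV (hsub (self_mem_gapOf hi))).antisymm hsub⟩

lemma IsGapBlock.eq_gapOf {n : ℕ} {V W : Finset (Fin n)} (hW : IsGapBlock V W) {i : Fin n}
    (hi : i ∈ W) : W = gapOf V i :=
  (hW.2.2 _ (isIntervalBlock_gapOf (Finset.mem_compl.1 (hW.2.1 hi)))
    (subset_gapOf hW.1 hW.2.1 hi) (gapOf_subset V i)).symm

lemma removalPoly_compl {n : ℕ} (w : Finset (Fin n) → ℂ) (V : Finset (Fin n)) :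
    removalPoly w Vᶜ = ∏ W ∈ gapBlocks V, removalPoly w W := by
  have key : ∀ F : Finset (Finset (Fin n)), F ⊆ gapBlocks V →
      removalPoly w (F.biUnion id) = ∏ W ∈ F, removalPoly w W := by
    intro F
    induction F using Finset.induction_on with
    | empty => simp [removalPoly_empty]
    | insert W F hWF ih =>
      intro hF
      rw [Finset.insert_subset_iff] at hF
      have hgap : ∀ U ∈ gapBlocks V, IsGapBlock V U := fun U hU => (Finset.mem_filter.1 hU).2
      rw [Finset.biUnion_insert, Finset.prod_insert hWF, ← ih hF.2, id, removalPoly_union]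
      intro a ha b hb hab
      obtain ⟨U, hUF, hbU⟩ := Finset.mem_biUnion.1 hb
      have hsub : W ∪ F.biUnion id ⊆ Vᶜ :=
        Finset.union_subset (hgap W hF.1).2.1
          (Finset.biUnion_subset.2 fun U hU => (hgap U (hF.2 hU)).2.1)
      have hbW : b ∈ W := by
        rw [(hgap W hF.1).eq_gapOf ha]
        simpa [gapOf] using hab.trans hsub
      have hWU : W = U :=
        ((hgap W hF.1).eq_gapOf hbW).trans ((hgap U (hF.2 hUF)).eq_gapOf hbU).symm
      exact hWF (hWU ▸ hUF)
  rw [← key _ (Finset.Subset.refl _)]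
  congr 1
  ext i
  rw [Finset.mem_biUnion]
  constructor
  · intro hi
    have hi := Finset.mem_compl.1 hi
    exact ⟨gapOf V i, by simp [gapBlocks, isGapBlock_gapOf hi], self_mem_gapOf hi⟩
  · rintro ⟨W, hW, hi⟩
    exact (Finset.mem_filter.1 hW).2.2.1 hi

/-! ### Invariance under reindexing -/

lemma removalSum_map {m n : ℕ} (e : Fin m ↪o Fin n)
    (he : ∀ a b : Fin m, ∀ d, e a ≤ d → d ≤ e b → ∃ c, e c = d)
    (w : Finset (Fin n) → ℂ) (k : ℕ) (S : Finset (Fin m)) :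
    removalSum w k (S.map e.toEmbedding) =
      removalSum (fun V => w (V.map e.toEmbedding)) k S := by
  induction k generalizing S with
  | zero => simp [removalSum]
  | succ k ih =>
    rw [removalSum, removalSum]
    symm
    refine Finset.sum_bij (fun V _ => V.map e.toEmbedding) ?_ ?_ ?_ ?_
    · intro V hV
      simp only [Finset.mem_filter, Finset.mem_univ, true_and] at hV ⊢
      refine ⟨hV.1.map, fun a ha b hb d hd => ?_⟩
      obtain ⟨a, ha', rfl⟩ := Finset.mem_map.1 ha
      obtain ⟨b, hb', rfl⟩ := Finset.mem_map.1 hb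
      rw [Finset.mem_Icc] at hd
      obtain ⟨c, rfl⟩ := he a b d hd.1 hd.2
      refine Finset.mem_map_of_mem e.toEmbedding (hV.2 a ha' b hb' ?_)
      rw [Finset.mem_Icc]
      exact ⟨e.le_iff_le.1 hd.1, e.le_iff_le.1 hd.2⟩
    · intro V _ V' _ h
      exact Finset.map_injective _ h
    · intro U hU
      simp only [Finset.mem_filter, Finset.mem_univ, true_and] at hU
      obtain ⟨V, hV, rfl⟩ := Finset.subset_map_iff.1 hU.2.subset
      refine ⟨V, ?_, rfl⟩
      simp only [Finset.mem_filter, Finset.mem_univ, true_and]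
      refine ⟨Finset.map_nonempty.1 hU.1, fun a ha b hb c hc => ?_⟩
      rw [Finset.mem_Icc] at hc
      have := hU.2 _ (Finset.mem_map_of_mem _ ha) _ (Finset.mem_map_of_mem _ hb)
        (Finset.mem_Icc.2 ⟨e.le_iff_le.2 hc.1, e.le_iff_le.2 hc.2⟩)
      exact (Finset.mem_map' e.toEmbedding).1 this
    · intro V _
      rw [← ih, Finset.map_sdiff]

lemma blockApply_eq {A : Type*} [AddCommMonoid A] [Module ℂ A]
    (K : ∀ m : ℕ, MultilinearMap ℂ (fun _ : Fin (m + 1) => A) ℂ)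
    {n m : ℕ} (X : Fin n → A) (W : Finset (Fin n)) (hW : W.card = m + 1)
    (f : Fin (m + 1) → Fin n) (hf : StrictMono f) (hfW : ∀ j, f j ∈ W) :
    blockApply K X W = K m (fun j => X (f j)) := by
  have hne : W.Nonempty := Finset.card_pos.1 (by omega)
  obtain rfl : m = W.card - 1 := by omega
  rw [blockApply, dif_pos hne]
  congr 1
  funext j
  congr 1
  rw [Finset.orderEmbOfFin_unique hW hfW hf]
  rfl

lemma blockApply_restrictFam {A : Type*} [AddCommMonoid A] [Module ℂ A]
    (K : ∀ m : ℕ, MultilinearMap ℂ (fun _ : Fin (m + 1) => A) ℂ)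
    {n : ℕ} (X : Fin n → A) (W : Finset (Fin n)) (V : Finset (Fin W.card)) :
    blockApply K (restrictFam X W) V =
      blockApply K X (V.map (W.orderEmbOfFin rfl).toEmbedding) := by
  rcases V.eq_empty_or_nonempty with rfl | hV
  · simp [blockApply]
  obtain ⟨m, hm⟩ : ∃ m, V.card = m + 1 := ⟨V.card - 1, by have := hV.card_pos; omega⟩
  rw [blockApply_eq K _ V hm (V.orderEmbOfFin hm) (V.orderEmbOfFin hm).strictMono
      (fun j => Finset.orderEmbOfFin_mem V hm j),
    blockApply_eq K X _ (by rw [Finset.card_map, hm])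
      (fun j => W.orderEmbOfFin rfl (V.orderEmbOfFin hm j))
      ((W.orderEmbOfFin rfl).strictMono.comp (V.orderEmbOfFin hm).strictMono)
      (fun j => Finset.mem_map_of_mem _ (Finset.orderEmbOfFin_mem V hm j))]
  rfl

lemma removalPoly_restrictFam {A : Type*} [AddCommMonoid A] [Module ℂ A]
    (K : ∀ m : ℕ, MultilinearMap ℂ (fun _ : Fin (m + 1) => A) ℂ)
    {n : ℕ} (X : Fin n → A) (W : Finset (Fin n)) (hW : IsIntervalBlock W) :
    removalPoly (blockApply K (restrictFam X W)) Finset.univ =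
      removalPoly (blockApply K X) W := by
  have hmap : (Finset.univ : Finset (Fin W.card)).map (W.orderEmbOfFin rfl).toEmbedding = W :=
    Finset.map_orderEmbOfFin_univ W rfl
  have hw : blockApply K (restrictFam X W) =
      fun V => blockApply K X (V.map (W.orderEmbOfFin rfl).toEmbedding) :=
    funext (blockApply_restrictFam K X W)
  ext k
  rw [coeff_removalPoly, coeff_removalPoly, hw, ← removalSum_map, hmap]
  intro a b d had hdb
  have hd : d ∈ W := by
    have ha := Finset.orderEmbOfFin_mem W rfl a
    have hb := Finset.orderEmbOfFin_mem W rfl b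
    refine hW.uIcc_subset ha hb ?_
    rw [Finset.uIcc_of_le (had.trans hdb), Finset.mem_Icc]
    exact ⟨had, hdb⟩
  rw [← hmap] at hd
  obtain ⟨c, -, hc⟩ := Finset.mem_map.1 hd
  exact ⟨c, hc⟩

/-! ### Monotone partitions as removal sequences -/

/-- `σ 0, σ 1, …` are nonempty disjoint blocks exhausting `S`, and the convex hull of each block
is covered by that block and the later ones. -/
def IsRemovalSeq {n k : ℕ} (S : Finset (Fin n)) (σ : Fin k → Finset (Fin n)) : Prop :=
  (∀ j, (σ j).Nonempty) ∧ (∀ i j, i < j → Disjoint (σ i) (σ j)) ∧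
    (∀ x, x ∈ S ↔ ∃ j, x ∈ σ j) ∧
    ∀ j, ∀ a ∈ σ j, ∀ b ∈ σ j, ∀ x ∈ Finset.Icc a b, ∃ i, j ≤ i ∧ x ∈ σ i

lemma isRemovalSeq_cons {n k : ℕ} (S V : Finset (Fin n)) (σ : Fin k → Finset (Fin n)) :
    IsRemovalSeq S (Fin.cons V σ : Fin (k + 1) → Finset (Fin n)) ↔
      (V.Nonempty ∧ InComponent S V) ∧ IsRemovalSeq (S \ V) σ := by
  constructor
  · rintro ⟨h1, h2, h3, h4⟩
    refine ⟨⟨by simpa using h1 0, fun a ha b hb x hx => ?_⟩, fun j => by simpa using h1 j.succ,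
      fun i j hij => by simpa using h2 i.succ j.succ (Fin.succ_lt_succ_iff.2 hij), fun x => ?_,
      fun j a ha b hb x hx => ?_⟩
    · obtain ⟨i, -, hi⟩ := h4 0 a (by simpa using ha) b (by simpa using hb) x hx
      exact (h3 x).2 ⟨i, hi⟩
    · rw [Finset.mem_sdiff, h3]
      constructor
      · rintro ⟨⟨j, hj⟩, hx⟩
        cases j using Fin.cases with
        | zero => exact absurd (by simpa using hj) hx
        | succ j => exact ⟨j, by simpa using hj⟩
      · rintro ⟨j, hj⟩
        refine ⟨⟨j.succ, by simpa using hj⟩, fun hx => ?_⟩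
        have := h2 0 j.succ (Fin.succ_pos j)
        rw [Fin.cons_zero, Fin.cons_succ] at this
        exact Finset.disjoint_left.1 this hx hj
    · obtain ⟨i, hi, hxi⟩ := h4 j.succ a (by simpa using ha) b (by simpa using hb) x hx
      cases i using Fin.cases with
      | zero => exact absurd hi (not_le.2 (Fin.succ_pos j))
      | succ i => exact ⟨i, Fin.succ_le_succ_iff.1 hi, by simpa using hxi⟩
  · rintro ⟨⟨hne, hV⟩, h1, h2, h3, h4⟩
    have hS : ∀ x, x ∈ S → x ∉ V → ∃ j, x ∈ σ j := fun x hx hxV =>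
      (h3 x).1 (Finset.mem_sdiff.2 ⟨hx, hxV⟩)
    have hσ : ∀ x j, x ∈ σ j → x ∈ S ∧ x ∉ V := fun x j hx =>
      Finset.mem_sdiff.1 ((h3 x).2 ⟨j, hx⟩)
    refine ⟨fun j => ?_, fun i j hij => ?_, fun x => ?_, fun j a ha b hb x hx => ?_⟩
    · cases j using Fin.cases with
      | zero => simpa using hne
      | succ j => simpa using h1 j
    · cases j using Fin.cases with
      | zero => exact absurd hij (Fin.not_lt_zero i)
      | succ j =>
        cases i using Fin.cases with
        | zero =>
          rw [Fin.cons_zero, Fin.cons_succ, Finset.disjoint_left]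
          exact fun x hx hxj => (hσ x j hxj).2 hx
        | succ i => simpa using h2 i j (Fin.succ_lt_succ_iff.1 hij)
    · constructor
      · intro hx
        by_cases hxV : x ∈ V
        · exact ⟨0, by simpa using hxV⟩
        · obtain ⟨j, hj⟩ := hS x hx hxV
          exact ⟨j.succ, by simpa using hj⟩
      · rintro ⟨j, hj⟩
        cases j using Fin.cases with
        | zero => exact hV.subset (by simpa using hj)
        | succ j => exact (hσ x j (by simpa using hj)).1
    · cases j using Fin.cases with
      | zero =>
        rw [Fin.cons_zero] at ha hb
        by_cases hxV : x ∈ V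
        · exact ⟨0, le_rfl, by simpa using hxV⟩
        · obtain ⟨j, hj⟩ := hS x (hV a ha b hb hx) hxV
          exact ⟨j.succ, Fin.zero_le _, by simpa using hj⟩
      | succ j =>
        rw [Fin.cons_succ] at ha hb
        obtain ⟨i, hi, hxi⟩ := h4 j a ha b hb x hx
        exact ⟨i.succ, Fin.succ_le_succ_iff.2 hi, by simpa using hxi⟩

lemma removalSum_eq_sum {n : ℕ} (w : Finset (Fin n) → ℂ) (k : ℕ) (S : Finset (Fin n)) :
    removalSum w k S =
      ∑ σ ∈ Finset.univ.filter (fun σ : Fin k → Finset (Fin n) => IsRemovalSeq S σ),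
        ∏ j, w (σ j) := by
  induction k generalizing S with
  | zero =>
    rw [removalSum, Finset.sum_filter, Fintype.sum_unique]
    simp [IsRemovalSeq, Finset.eq_empty_iff_forall_notMem]
  | succ k ih =>
    rw [removalSum, Finset.sum_filter, Finset.sum_filter,
      ← (Fin.consEquiv (fun _ : Fin (k + 1) => Finset (Fin n))).sum_comp, Fintype.sum_prod_type]
    refine Finset.sum_congr rfl fun V _ => ?_
    have hcons : ∀ σ : Fin k → Finset (Fin n),
        Fin.consEquiv (fun _ : Fin (k + 1) => Finset (Fin n)) (V, σ) = Fin.cons V σ :=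
      fun _ => rfl
    simp only [hcons, isRemovalSeq_cons, Fin.prod_univ_succ, Fin.cons_zero, Fin.cons_succ]
    split_ifs with h
    · rw [ih, Finset.sum_filter, Finset.mul_sum]
      refine Finset.sum_congr rfl fun σ _ => ?_
      simp [h]
    · simp [h]

/-- Non-crossing and compatibility with nesting together say exactly that between two elements
of a block no smaller label occurs. -/
lemma isMonotoneLabel_iff {n : ℕ} (ℓ : Fin n → Fin n) :
    IsMonotoneLabel ℓ ↔ (∀ j k : Fin n, k ≤ j → (∃ i, ℓ i = j) → ∃ i, ℓ i = k) ∧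
      ∀ a b x, a ≤ x → x ≤ b → ℓ a = ℓ b → ℓ a ≤ ℓ x := by
  constructor
  · rintro ⟨h1, h2, h3⟩
    refine ⟨h1, fun a b x hax hxb hab => ?_⟩
    by_contra! hlt
    have hax' : a < x := lt_of_le_of_ne hax (by rintro rfl; exact lt_irrefl _ hlt)
    have hxb' : x < b := lt_of_le_of_ne hxb (by rintro rfl; exact lt_irrefl _ (hab ▸ hlt))
    refine absurd (h3 (ℓ x) (ℓ a) ⟨x, rfl⟩ ⟨a, b, rfl, hab.symm, fun k hk => ⟨?_, ?_⟩⟩) hlt.not_gt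
    · by_contra! hka
      have hka' : k < a := lt_of_le_of_ne hka (by rintro rfl; exact hlt.ne hk.symm)
      have := h2 k a x b hka' hax' hxb' hk hab
      exact hlt.ne (hk ▸ this)
    · by_contra! hkb
      have hkb' : b < k := lt_of_le_of_ne hkb (by rintro rfl; exact hlt.ne (hab ▸ hk.symm))
      have := h2 a x b k hax' hxb' hkb' hab hk.symm
      exact hlt.ne this.symm
  · rintro ⟨h1, h2⟩
    refine ⟨h1, fun a b c d hab hbc hcd hac hbd => ?_, ?_⟩
    · exact le_antisymm (h2 a c b hab.le hbc.le hac) (hac ▸ h2 b d c hbc.le hcd.le hbd)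
    · rintro _ _ ⟨k, rfl⟩ ⟨i, j, hi, rfl, h⟩
      refine lt_of_le_of_ne ?_ fun heq => ?_
      · have := h2 i j k (h k rfl).1.le (h k rfl).2.le hi
        rwa [hi] at this
      · exact lt_irrefl _ (h j heq).2

lemma IsMonotoneLabel.exists_iff {n : ℕ} {ℓ : Fin n → Fin n} (h : IsMonotoneLabel ℓ) (j : Fin n) :
    j ∈ Finset.image ℓ Finset.univ ↔ (j : ℕ) < numBlocks ℓ := by
  rw [numBlocks]
  constructor
  · intro hj
    have hsub : Finset.Iic j ⊆ Finset.image ℓ Finset.univ := by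
      intro k hk
      have := h.1 j k (Finset.mem_Iic.1 hk) (by simpa using hj)
      simpa using this
    have := Finset.card_le_card hsub
    rw [Fin.card_Iic] at this
    omega
  · intro hj
    by_contra hn
    have hsub : Finset.image ℓ Finset.univ ⊆ Finset.Iio j := by
      intro k hk
      rw [Finset.mem_Iio]
      by_contra! hjk
      have := h.1 k j hjk (by simpa using hk)
      exact hn (by simpa using this)
    have := Finset.card_le_card hsub
    rw [Fin.card_Iio] at this
    omega

/-- The block carrying the label `j` as a function of a label in `Fin k` instead of `Fin n`. -/
noncomputable def blockSeq {n : ℕ} (k : ℕ) (ℓ : Fin n → Fin n) (j : Fin k) : Finset (Fin n) :=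
  Finset.univ.filter (fun i => (ℓ i : ℕ) = j)

lemma mem_blockSeq {n k : ℕ} (ℓ : Fin n → Fin n) (j : Fin k) (i : Fin n) :
    i ∈ blockSeq k ℓ j ↔ (ℓ i : ℕ) = j := by
  simp [blockSeq]

lemma cumProd_eq_prod_blockSeq {A : Type*} [AddCommMonoid A] [Module ℂ A]
    (K : ∀ m : ℕ, MultilinearMap ℂ (fun _ : Fin (m + 1) => A) ℂ)
    {n : ℕ} (X : Fin n → A) {ℓ : Fin n → Fin n} (h : IsMonotoneLabel ℓ) :
    cumProd K X ℓ = ∏ j, blockApply K X (blockSeq (numBlocks ℓ) ℓ j) := by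
  rw [cumProd]
  refine Finset.prod_bij (fun j hj => ⟨j, (h.exists_iff j).1 hj⟩) (fun _ _ => Finset.mem_univ _)
    ?_ ?_ ?_
  · intro a _ b _ hab
    simpa [Fin.ext_iff] using hab
  · intro j _
    have hle : numBlocks ℓ ≤ n := by
      simpa [numBlocks] using Finset.card_le_univ (Finset.image ℓ Finset.univ)
    exact ⟨⟨j, j.2.trans_le hle⟩, (h.exists_iff _).2 j.2, rfl⟩
  · intro j _
    congr 1
    ext i
    simp [labelBlock, mem_blockSeq, Fin.ext_iff]

lemma IsMonotoneLabel.isRemovalSeq {n : ℕ} {ℓ : Fin n → Fin n} (h : IsMonotoneLabel ℓ) :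
    IsRemovalSeq Finset.univ (blockSeq (numBlocks ℓ) ℓ) := by
  have hlt : ∀ i, (ℓ i : ℕ) < numBlocks ℓ := fun i => (h.exists_iff _).1 (by simp)
  have hle : numBlocks ℓ ≤ n := by
    simpa [numBlocks] using Finset.card_le_univ (Finset.image ℓ Finset.univ)
  refine ⟨fun j => ?_, fun i j hij => ?_, fun x => ?_, fun j a ha b hb x hx => ?_⟩
  · have := (h.exists_iff ⟨j, j.2.trans_le hle⟩).2 j.2
    obtain ⟨i, -, hi⟩ := Finset.mem_image.1 this
    exact ⟨i, (mem_blockSeq _ _ _).2 (by rw [hi])⟩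
  · rw [Finset.disjoint_left]
    intro x hx hx'
    rw [mem_blockSeq] at hx hx'
    exact hij.ne (Fin.ext (hx.symm.trans hx'))
  · exact ⟨fun _ => ⟨⟨ℓ x, hlt x⟩, by simp [mem_blockSeq]⟩, fun _ => Finset.mem_univ x⟩
  · rw [mem_blockSeq] at ha hb
    rw [Finset.mem_Icc] at hx
    refine ⟨⟨ℓ x, hlt x⟩, ?_, by simp [mem_blockSeq]⟩
    have := ((isMonotoneLabel_iff ℓ).1 h).2 a b x hx.1 hx.2 (Fin.ext (ha.trans hb.symm))
    rw [Fin.le_def] at this ⊢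
    simp only
    omega

lemma IsRemovalSeq.exists_label {n k : ℕ} {σ : Fin k → Finset (Fin n)}
    (h : IsRemovalSeq Finset.univ σ) :
    ∃ ℓ : Fin n → Fin n, IsMonotoneLabel ℓ ∧ numBlocks ℓ = k ∧ blockSeq k ℓ = σ := by
  obtain ⟨h1, h2, h3, h4⟩ := h
  have huniq : ∀ x i j, x ∈ σ i → x ∈ σ j → i = j := by
    intro x i j hi hj
    rcases lt_trichotomy i j with hij | hij | hij
    · exact absurd hj (Finset.disjoint_left.1 (h2 i j hij) hi)
    · exact hij
    · exact absurd hi (Finset.disjoint_left.1 (h2 j i hij) hj)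
  choose lab hlab using fun x => (h3 x).1 (Finset.mem_univ x)
  choose rep hrep using h1
  have hlabrep : ∀ j, lab (rep j) = j := fun j => huniq _ _ _ (hlab _) (hrep j)
  have hle : k ≤ n := by
    simpa using Fintype.card_le_of_injective rep (Function.LeftInverse.injective hlabrep)
  have hcast : ∀ x, (Fin.castLE hle (lab x) : ℕ) = lab x := fun _ => rfl
  have himage : Finset.image (fun x => Fin.castLE hle (lab x)) Finset.univ =
      (Finset.univ : Finset (Fin k)).map (Fin.castLEEmb hle) := by
    ext j
    simp only [Finset.mem_image, Finset.mem_univ, true_and, Finset.mem_map]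
    constructor
    · rintro ⟨x, rfl⟩
      exact ⟨lab x, rfl⟩
    · rintro ⟨i, rfl⟩
      exact ⟨rep i, by rw [hlabrep]; rfl⟩
  refine ⟨fun x => Fin.castLE hle (lab x), (isMonotoneLabel_iff _).2 ⟨?_, ?_⟩, ?_, ?_⟩
  · rintro _ i hij ⟨x, rfl⟩
    have hi : (i : ℕ) < k := lt_of_le_of_lt (Fin.le_def.1 hij) (lab x).2
    exact ⟨rep ⟨i, hi⟩, by rw [hlabrep]; rfl⟩
  · intro a b x hax hxb hab
    have hab' : lab a = lab b := Fin.ext (by simpa [Fin.ext_iff] using hab)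
    obtain ⟨i, hi, hxi⟩ := h4 (lab a) a (hlab a) b (hab' ▸ hlab b) x (Finset.mem_Icc.2 ⟨hax, hxb⟩)
    rw [huniq x _ _ hxi (hlab x)] at hi
    exact hi
  · rw [numBlocks, himage, Finset.card_map, Finset.card_univ, Fintype.card_fin]
  · funext j
    ext x
    rw [mem_blockSeq, hcast, ← Fin.ext_iff]
    exact ⟨fun hx => hx ▸ hlab x, fun hx => huniq x _ _ (hlab x) hx⟩

lemma sum_cumProd_eq_removalSum {A : Type*} [AddCommMonoid A] [Module ℂ A]
    (K : ∀ m : ℕ, MultilinearMap ℂ (fun _ : Fin (m + 1) => A) ℂ)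
    {n : ℕ} (X : Fin n → A) (k : ℕ) :
    ∑ ℓ ∈ (monotoneLabels n).filter (fun ℓ => numBlocks ℓ = k), cumProd K X ℓ =
      removalSum (blockApply K X) k Finset.univ := by
  rw [removalSum_eq_sum]
  have hmem : ∀ ℓ ∈ (monotoneLabels n).filter (fun ℓ => numBlocks ℓ = k),
      IsMonotoneLabel ℓ ∧ numBlocks ℓ = k := by
    intro ℓ hℓ
    simpa [monotoneLabels] using hℓ
  refine Finset.sum_bij (fun ℓ _ => blockSeq k ℓ) ?_ ?_ ?_ ?_
  · intro ℓ hℓ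
    obtain ⟨hmon, rfl⟩ := hmem ℓ hℓ
    simpa using hmon.isRemovalSeq
  · intro ℓ hℓ ℓ' _ heq
    obtain ⟨hmon, rfl⟩ := hmem ℓ hℓ
    funext i
    have hi : i ∈ blockSeq (numBlocks ℓ) ℓ ⟨ℓ i, (hmon.exists_iff _).1 (by simp)⟩ := by
      simp [mem_blockSeq]
    rw [show blockSeq (numBlocks ℓ) ℓ = blockSeq (numBlocks ℓ) ℓ' from heq, mem_blockSeq] at hi
    exact Fin.ext hi.symm
  · intro σ hσ
    obtain ⟨ℓ, h1, h2, h3⟩ := (Finset.mem_filter.1 hσ).2.exists_label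
    exact ⟨ℓ, by simp [monotoneLabels, h1, h2], h3⟩
  · intro ℓ hℓ
    obtain ⟨hmon, rfl⟩ := hmem ℓ hℓ
    exact cumProd_eq_prod_blockSeq K X hmon

lemma phiPoly_eq_removalPoly {A : Type*} [AddCommMonoid A] [Module ℂ A]
    (K : ∀ m : ℕ, MultilinearMap ℂ (fun _ : Fin (m + 1) => A) ℂ)
    {n : ℕ} (X : Fin n → A) :
    phiPoly K X = removalPoly (blockApply K X) Finset.univ := by
  ext k
  rw [coeff_removalPoly, ← sum_cumProd_eq_removalSum, phiPoly, Polynomial.finsetSum_coeff,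
    Finset.sum_filter, Finset.sum_div]
  refine Finset.sum_congr rfl fun ℓ _ => ?_
  rw [Polynomial.coeff_mul_C, Polynomial.coeff_C_mul_X_pow]
  by_cases h : numBlocks ℓ = k
  · subst h
    simp [div_eq_inv_mul]
  · simp [h, Ne.symm h]

/-! ### The recurrence -/

/-- Recurrence (1): `(d/dt) φ_t(X₁, …, Xₙ) = Σ_{∅ ≠ V ⊆ {1,…,n}} K_{|V|}(X_V) ∏_j φ_t(X_{V_j})`
as an identity of polynomials in `t`, where the `V_j` are the gap blocks of `V`. -/
theorem phiPoly_derivative_gapBlocks {A : Type*} [AddCommMonoid A] [Module ℂ A]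
    (K : ∀ m : ℕ, MultilinearMap ℂ (fun _ : Fin (m + 1) => A) ℂ)
    {n : ℕ} (hn : 1 ≤ n) (X : Fin n → A) :
    Polynomial.derivative (phiPoly K X) =
      ∑ V ∈ Finset.univ.filter (fun V : Finset (Fin n) => V.Nonempty),
        Polynomial.C (blockApply K X V) *
          ∏ W ∈ gapBlocks V, phiPoly K (restrictFam X W) := by
  rw [phiPoly_eq_removalPoly, derivative_removalPoly]
  have hfilter : Finset.univ.filter (fun V : Finset (Fin n) => V.Nonempty ∧
      InComponent Finset.univ V) = Finset.univ.filter (fun V : Finset (Fin n) => V.Nonempty) := by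
    ext V
    simp [InComponent]
  rw [hfilter]
  refine Finset.sum_congr rfl fun V _ => ?_
  rw [← Finset.compl_eq_univ_sdiff, removalPoly_compl]
  congr 1
  refine Finset.prod_congr rfl fun W hW => ?_
  rw [phiPoly_eq_removalPoly, removalPoly_restrictFam K X W (Finset.mem_filter.1 hW).2.1]
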